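/- arXiv:1507.03973 — 3 statements merged into one kernel-verified Lean document; each statement's English description precedes it below -/
import Mathlib

section
/- Let φ : V → V, J♯ : Hom(V,L) → V and ω♭ : V → Hom(V,L) be linear maps with J♯ skew and ω♭ skew, and let I be the endomorphism of 𝔻 = V ⊕ Hom(V,L) given by I(v,ψ) = (φ(v) + J♯(ψ), ω♭(v) − φ†(ψ)). Then I² = −id if and only if the three structure equations hold: (i) φ ∘ J♯ = J♯ ∘ φ†, (ii) φ² = −id_V − J♯ ∘ ω♭, (iii) ω♭ ∘ φ = φ† ∘ ω♭. (In particular, the remaining block identity ω♭ ∘ J♯ + (φ†)² = −id on Hom(V,L) is automatically implied by (i)–(iii) via adjunction, using that V is finite-dimensional and L is one-dimensional.) -/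
/-- The adjoint `φ† : Hom(V, L) → Hom(V, L)`, `φ†(ψ) := ψ ∘ φ`, of a linear map
`φ : V → V`, as a linear map. -/
def adjD {K V : Type*} (L : Type*) [Field K] [AddCommGroup V] [Module K V]
    [AddCommGroup L] [Module K L] (φ : V →ₗ[K] V) :
    (V →ₗ[K] L) →ₗ[K] (V →ₗ[K] L) :=
  (LinearMap.llcomp K V V L).flip φ

/-!
In block form, `I² = −id` on `V ⊕ Hom(V, L)` is a system of four equations, three of which are the
structure equations. Since `J♯` and `ω♭` are both skew, `(J♯ ∘ ω♭)† = ω♭ ∘ J♯`, so the fourth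
equation, `ω♭ ∘ J♯ + (φ†)² = −id`, is the adjoint of `φ² = −id − J♯ ∘ ω♭`.
-/

section BlockOperators

variable {R M N : Type*} [Ring R] [AddCommGroup M] [Module R M] [AddCommGroup N] [Module R N]

theorem coprod_prod_coprod_comp_self_eq_neg_id_iff
    (a : M →ₗ[R] M) (b : N →ₗ[R] M) (c : M →ₗ[R] N) (d : N →ₗ[R] N) :
    ((a.coprod b).prod (c.coprod d)) ∘ₗ ((a.coprod b).prod (c.coprod d)) = -LinearMap.id ↔
      (a ∘ₗ a + b ∘ₗ c = -LinearMap.id ∧ c ∘ₗ a + d ∘ₗ c = 0) ∧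
        (a ∘ₗ b + b ∘ₗ d = 0 ∧ c ∘ₗ b + d ∘ₗ d = -LinearMap.id) := by
  rw [LinearMap.prod_ext_iff]
  simp [LinearMap.ext_iff, forall_and]

end BlockOperators

section Adjoint

variable {R V L : Type*} [CommRing R] [AddCommGroup V] [Module R V] [AddCommGroup L] [Module R L]
  {φ : V →ₗ[R] V} {J : (V →ₗ[R] L) →ₗ[R] V} {ω : V →ₗ[R] V →ₗ[R] L}

theorem lcomp_comp_eq_comp_of_skew (hJ : ∀ ψ χ : V →ₗ[R] L, ψ (J χ) = -χ (J ψ))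
    (hω : ∀ v w : V, ω v w = -ω w v) :
    LinearMap.lcomp R L (J ∘ₗ ω) = ω ∘ₗ J := by
  ext ψ v
  calc ψ (J (ω v)) = -ω v (J ψ) := hJ ψ (ω v)
    _ = ω (J ψ) v := (hω (J ψ) v).symm

theorem comp_add_lcomp_comp_lcomp_eq_neg_id
    (hadj : LinearMap.lcomp R L (J ∘ₗ ω) = ω ∘ₗ J) (hφ : φ ∘ₗ φ + J ∘ₗ ω = -LinearMap.id) :
    ω ∘ₗ J + LinearMap.lcomp R L φ ∘ₗ LinearMap.lcomp R L φ = -LinearMap.id := by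
  rw [← hadj, add_comm]
  ext ψ v
  simpa using congrArg ψ (LinearMap.congr_fun hφ v)

theorem sq_neg_id_iff_structure_equations_general
    (hJ : ∀ ψ χ : V →ₗ[R] L, ψ (J χ) = -χ (J ψ)) (hω : ∀ v w : V, ω v w = -ω w v)
    {I : (V × (V →ₗ[R] L)) →ₗ[R] (V × (V →ₗ[R] L))}
    (hI : ∀ (v : V) (ψ : V →ₗ[R] L), I (v, ψ) = (φ v + J ψ, ω v - ψ ∘ₗ φ)) :
    (∀ α : V × (V →ₗ[R] L), I (I α) = -α) ↔
      φ ∘ₗ J = J ∘ₗ LinearMap.lcomp R L φ ∧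
        φ ∘ₗ φ = -LinearMap.id - J ∘ₗ ω ∧
        ω ∘ₗ φ = LinearMap.lcomp R L φ ∘ₗ ω := by
  have hblocks : I = (φ.coprod J).prod (ω.coprod (-LinearMap.lcomp R L φ)) :=
    LinearMap.ext fun ⟨v, ψ⟩ => (hI v ψ).trans (Prod.ext rfl (sub_eq_add_neg _ _))
  have hsq : (∀ α, I (I α) = -α) ↔ I ∘ₗ I = -LinearMap.id :=
    (LinearMap.ext_iff (f := I ∘ₗ I) (g := -LinearMap.id)).symm
  rw [hsq, hblocks, coprod_prod_coprod_comp_self_eq_neg_id_iff, eq_sub_iff_add_eq]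
  simp only [LinearMap.neg_comp, LinearMap.comp_neg, neg_neg, add_neg_eq_zero]
  constructor
  · rintro ⟨⟨hφφ, hωφ⟩, hφJ, -⟩
    exact ⟨hφJ, hφφ, hωφ⟩
  · rintro ⟨hφJ, hφφ, hωφ⟩
    have hadj := lcomp_comp_eq_comp_of_skew hJ hω
    exact ⟨⟨hφφ, hωφ⟩, hφJ, comp_add_lcomp_comp_lcomp_eq_neg_id hadj hφφ⟩

end Adjoint

/-- For `I(v, ψ) = (φ v + J♯ ψ, ω♭ v − φ† ψ)` with `J♯` and `ω♭` skew,
`I² = −id` iff the three structure equations `φ ∘ J♯ = J♯ ∘ φ†`,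
`φ² = −id − J♯ ∘ ω♭`, `ω♭ ∘ φ = φ† ∘ ω♭` hold (the remaining block identity
`ω♭ ∘ J♯ + (φ†)² = −id` being automatic from these by adjunction). -/
theorem sq_neg_id_iff_structure_equations
    (K V L : Type*) [Field K] [AddCommGroup V] [Module K V] [FiniteDimensional K V]
    [AddCommGroup L] [Module K L] (hL : Module.finrank K L = 1)
    (φ : V →ₗ[K] V) (Js : (V →ₗ[K] L) →ₗ[K] V) (ωf : V →ₗ[K] V →ₗ[K] L)
    (hJ : ∀ ψ χ : V →ₗ[K] L, ψ (Js χ) = -χ (Js ψ))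
    (hω : ∀ v w : V, ωf v w = -ωf w v)
    (I : (V × (V →ₗ[K] L)) →ₗ[K] (V × (V →ₗ[K] L)))
    (hI : ∀ (v : V) (ψ : V →ₗ[K] L), I (v, ψ) = (φ v + Js ψ, ωf v - ψ.comp φ)) :
    (∀ α : V × (V →ₗ[K] L), I (I α) = -α) ↔
      (φ.comp Js = Js.comp (adjD L φ) ∧
       φ.comp φ = -LinearMap.id - Js.comp ωf ∧
       ωf.comp φ = (adjD L φ).comp ωf) :=
  sq_neg_id_iff_structure_equations_general hJ hω hI
end

section
/- Let (φ, J♯, ω♭) be a triple of linear maps (φ : V → V, J♯ : Hom(V,L) → V skew, ω♭ : V → Hom(V,L) skew) satisfying the structure equations φ ∘ J♯ = J♯ ∘ φ†, φ² = −id − J♯ ∘ ω♭, ω♭ ∘ φ = φ† ∘ ω♭, and suppose J♯ is bijective. Then, setting ω_J♭ := (J♯)⁻¹, one has ω♭ = −(ω_J♭ + φ† ∘ ω_J♭ ∘ φ); equivalently, in terms of the associated bilinear forms, ω = −(ω_J + φ*ω_J), where ω(v,w) := ω♭(v)(w), ω_J(v,w) := ω_J♭(v)(w) and (φ*ω_J)(v,w)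 := ω_J(φ(v), φ(w)). -/
theorem symm_comp_eq_comp_symm_of_comp_eq_comp {R X Y V W : Type*} [Semiring R]
    [AddCommMonoid X] [Module R X] [AddCommMonoid Y] [Module R Y]
    [AddCommMonoid V] [Module R V] [AddCommMonoid W] [Module R W]
    {f : V →ₗ[R] W} {g : X →ₗ[R] Y} (e : X ≃ₗ[R] V) (e' : Y ≃ₗ[R] W)
    (h : f ∘ₗ e.toLinearMap = e'.toLinearMap ∘ₗ g) :
    e'.symm.toLinearMap ∘ₗ f = g ∘ₗ e.symm.toLinearMap := by
  rwa [LinearEquiv.toLinearMap_symm_comp_eq, ← LinearMap.comp_assoc,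
    LinearEquiv.eq_comp_toLinearMap_symm]

theorem eq_neg_symm_add_comp_symm_comp {R V X : Type*} [Semiring R]
    [AddCommGroup V] [Module R V] [AddCommGroup X] [Module R X]
    {φ : V →ₗ[R] V} {ψ : X →ₗ[R] X} {ω : V →ₗ[R] X} (J : X ≃ₗ[R] V)
    (hφJ : φ ∘ₗ J.toLinearMap = J.toLinearMap ∘ₗ ψ)
    (hφφ : φ ∘ₗ φ = -LinearMap.id - J.toLinearMap ∘ₗ ω) :
    ω = -(J.symm.toLinearMap + ψ ∘ₗ J.symm.toLinearMap ∘ₗ φ) := by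
  have J_comp_ω : J.toLinearMap ∘ₗ ω = -(LinearMap.id + φ ∘ₗ φ) := by
    rw [hφφ]
    abel
  calc
    ω = J.symm.toLinearMap ∘ₗ (-(LinearMap.id + φ ∘ₗ φ)) :=
      (LinearEquiv.eq_toLinearMap_symm_comp _ _).mpr J_comp_ω
    _ = -(J.symm.toLinearMap + (J.symm.toLinearMap ∘ₗ φ) ∘ₗ φ) := by
      rw [LinearMap.comp_neg, LinearMap.comp_add, LinearMap.comp_id, LinearMap.comp_assoc]
    _ = -(J.symm.toLinearMap + ψ ∘ₗ J.symm.toLinearMap ∘ₗ φ) := by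
      rw [← LinearMap.comp_assoc φ, symm_comp_eq_comp_symm_of_comp_eq_comp J J hφJ]

theorem omega_eq_neg_omegaJ_plus_pullback_general
    {R V L : Type*} [CommSemiring R] [AddCommGroup V] [Module R V] [AddCommGroup L] [Module R L]
    {φ : V →ₗ[R] V} {ω : V →ₗ[R] V →ₗ[R] L} (J : (V →ₗ[R] L) ≃ₗ[R] V)
    (hφJ : φ ∘ₗ J.toLinearMap = J.toLinearMap ∘ₗ LinearMap.lcomp R L φ)
    (hφφ : φ ∘ₗ φ = -LinearMap.id - J.toLinearMap ∘ₗ ω) :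
    (∀ v, ω v = -(J.symm v + LinearMap.lcomp R L φ (J.symm (φ v)))) ∧
      ∀ v w, ω v w = -(J.symm v w + J.symm (φ v) (φ w)) := by
  have ω_eq := eq_neg_symm_add_comp_symm_comp J hφJ hφφ
  exact ⟨LinearMap.congr_fun ω_eq, LinearMap.congr_fun₂ ω_eq⟩

/-- If `(φ, J♯, ω♭)` satisfies the structure equations and `J♯` is
bijective then, with `ω_J♭ := (J♯)⁻¹`, one has `ω♭ = −(ω_J♭ + φ† ∘ ω_J♭ ∘ φ)`;
equivalently, for the bilinear forms, `ω = −(ω_J + φ*ω_J)` where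
`(φ*ω_J)(v, w) := ω_J(φ v, φ w)`. -/
theorem omega_eq_neg_omegaJ_plus_pullback
    (K V L : Type*) [Field K] [AddCommGroup V] [Module K V] [FiniteDimensional K V]
    [AddCommGroup L] [Module K L] (hL : Module.finrank K L = 1)
    (φ : V →ₗ[K] V) (Js : (V →ₗ[K] L) →ₗ[K] V) (ωf : V →ₗ[K] V →ₗ[K] L)
    (hJ : ∀ ψ χ : V →ₗ[K] L, ψ (Js χ) = -χ (Js ψ))
    (hω : ∀ v w : V, ωf v w = -ωf w v)
    (h1 : φ.comp Js = Js.comp (adjD L φ))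
    (h2 : φ.comp φ = -LinearMap.id - Js.comp ωf)
    (h3 : ωf.comp φ = (adjD L φ).comp ωf)
    (hbij : Function.Bijective Js) :
    (∀ v : V,
      ωf v = -((LinearEquiv.ofBijective Js hbij).symm v
                + adjD L φ ((LinearEquiv.ofBijective Js hbij).symm (φ v)))) ∧
    (∀ v w : V,
      ωf v w = -((LinearEquiv.ofBijective Js hbij).symm v w
                  + (LinearEquiv.ofBijective Js hbij).symm (φ v) (φ w))) := by
  exact omega_eq_neg_omegaJ_plus_pullback_general (LinearEquiv.ofBijective Js hbij) h1 h2
end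

section
/- Let ω_J♭ : V → Hom(V,L) be a skew bijective linear map and let φ : V → V satisfy ω_J♭ ∘ φ = φ† ∘ ω_J♭. Define J♯ := (ω_J♭)⁻¹ : Hom(V,L) → V and ω♭ := −(ω_J♭ + φ† ∘ ω_J♭ ∘ φ) : V → Hom(V,L). Then J♯ is skew, ω♭ is skew, and the triple (φ, J♯, ω♭) satisfies the structure equations φ ∘ J♯ = J♯ ∘ φ†, φ² = −id − J♯ ∘ ω♭, ω♭ ∘ φ = φ† ∘ ω♭; hence it defines a generalized almost contact structure on (V,L) with invertible J♯. -/
/-- `J♯ := (ω_J♭)⁻¹ : Hom(V, L) → V`, the inverse of a bijective `ω_J♭`. -/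
noncomputable def JsOf {K V L : Type*} [Field K] [AddCommGroup V] [Module K V]
    [AddCommGroup L] [Module K L] (ωJb : V →ₗ[K] (V →ₗ[K] L))
    (hbij : Function.Bijective ωJb) : (V →ₗ[K] L) →ₗ[K] V :=
  (LinearEquiv.ofBijective ωJb hbij).symm.toLinearMap

/-! Self-adjointness `ω_J♭ ∘ φ = φ† ∘ ω_J♭` turns the form `ω♭` into `−ω_J♭ ∘ (id + φ²)`.
Applying `J♯ = (ω_J♭)⁻¹` yields the quadratic structure equation, and since `φ` commutes with
`id + φ²`, it is self-adjoint for `ω♭` as well. -/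

section

variable {R V L : Type*} [CommRing R] [AddCommGroup V] [Module R V] [AddCommGroup L] [Module R L]

/-- Skew-symmetry of an `L`-valued bilinear form `ω♭ : V → Hom(V, L)`. In characteristic two this
is weaker than being alternating. -/
def IsSkewForm (ω : V →ₗ[R] V →ₗ[R] L) : Prop :=
  ∀ v w, ω v w = -ω w v

/-- Skew-symmetry of an `L`-twisted bivector `J♯ : Hom(V, L) → V`. -/
def IsSkewBivector (J : (V →ₗ[R] L) →ₗ[R] V) : Prop :=
  ∀ ψ χ : V →ₗ[R] L, ψ (J χ) = -χ (J ψ)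

/-- A generalized almost contact structure on `(V, L)`, encoded by the components `(φ, J♯, ω♭)` of
the endomorphism of `V ⊕ Hom(V, L)`. The adjoint `φ†` is `LinearMap.lcomp R L φ`. -/
structure IsGeneralizedAlmostContact (φ : V →ₗ[R] V) (J : (V →ₗ[R] L) →ₗ[R] V)
    (ω : V →ₗ[R] V →ₗ[R] L) : Prop where
  skew_bivector : IsSkewBivector J
  skew_form : IsSkewForm ω
  comp_bivector : φ ∘ₗ J = J ∘ₗ φ.lcomp R L
  sq_eq : φ ∘ₗ φ = -LinearMap.id - J ∘ₗ ω
  form_comp : ω ∘ₗ φ = φ.lcomp R L ∘ₗ ω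

/-- The form `ω♭ := −(ω_J♭ + φ† ∘ ω_J♭ ∘ φ)` completing a contact Hitchin pair `(ω_J♭, φ)` to a
generalized almost contact structure. -/
def hitchinForm (ω : V →ₗ[R] V →ₗ[R] L) (φ : V →ₗ[R] V) : V →ₗ[R] V →ₗ[R] L :=
  -(ω + φ.lcomp R L ∘ₗ ω ∘ₗ φ)

theorem IsSkewForm.neg {ω : V →ₗ[R] V →ₗ[R] L} (hω : IsSkewForm ω) : IsSkewForm (-ω) :=
  fun v w => congrArg Neg.neg (hω v w)

theorem IsSkewForm.add {ω η : V →ₗ[R] V →ₗ[R] L} (hω : IsSkewForm ω) (hη : IsSkewForm η) :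
    IsSkewForm (ω + η) := fun v w => by
  simp only [LinearMap.add_apply, hω v w, hη v w, neg_add]

theorem IsSkewForm.pullback {W : Type*} [AddCommGroup W] [Module R W]
    {ω : V →ₗ[R] V →ₗ[R] L} (hω : IsSkewForm ω) (f : W →ₗ[R] V) :
    IsSkewForm (f.lcomp R L ∘ₗ ω ∘ₗ f) :=
  fun v w => hω (f v) (f w)

theorem IsSkewForm.hitchinForm {ω : V →ₗ[R] V →ₗ[R] L} (hω : IsSkewForm ω) (φ : V →ₗ[R] V) :
    IsSkewForm (hitchinForm ω φ) :=
  (hω.add (hω.pullback φ)).neg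

theorem IsSkewForm.isSkewBivector_symm {e : V ≃ₗ[R] (V →ₗ[R] L)}
    (he : IsSkewForm e.toLinearMap) : IsSkewBivector e.symm.toLinearMap := fun ψ χ => by
  simpa using he (e.symm ψ) (e.symm χ)

theorem hitchinForm_eq_neg_comp {ω : V →ₗ[R] V →ₗ[R] L} {φ : V →ₗ[R] V}
    (hφ : ω ∘ₗ φ = φ.lcomp R L ∘ₗ ω) :
    hitchinForm ω φ = -(ω ∘ₗ (LinearMap.id + φ ∘ₗ φ)) := by
  rw [hitchinForm, ← LinearMap.comp_assoc, ← hφ, LinearMap.comp_assoc, LinearMap.comp_add,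
    LinearMap.comp_id]

theorem hitchinForm_comp {ω : V →ₗ[R] V →ₗ[R] L} {φ : V →ₗ[R] V}
    (hφ : ω ∘ₗ φ = φ.lcomp R L ∘ₗ ω) :
    hitchinForm ω φ ∘ₗ φ = φ.lcomp R L ∘ₗ hitchinForm ω φ := by
  have hcomm : (LinearMap.id + φ ∘ₗ φ) ∘ₗ φ = φ ∘ₗ (LinearMap.id + φ ∘ₗ φ) := by
    rw [LinearMap.add_comp, LinearMap.comp_add, LinearMap.id_comp, LinearMap.comp_id,
      LinearMap.comp_assoc]
  rw [hitchinForm_eq_neg_comp hφ, LinearMap.neg_comp, LinearMap.comp_neg, LinearMap.comp_assoc,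
    hcomm, ← LinearMap.comp_assoc, hφ, LinearMap.comp_assoc]

theorem symm_comp_hitchinForm {e : V ≃ₗ[R] (V →ₗ[R] L)} {φ : V →ₗ[R] V}
    (hφ : e.toLinearMap ∘ₗ φ = φ.lcomp R L ∘ₗ e.toLinearMap) :
    e.symm.toLinearMap ∘ₗ hitchinForm e.toLinearMap φ = -(LinearMap.id + φ ∘ₗ φ) := by
  rw [hitchinForm_eq_neg_comp hφ, LinearMap.comp_neg, ← LinearMap.comp_assoc, e.symm_comp,
    LinearMap.id_comp]

theorem contactHitchin_gives_gacs_general {e : V ≃ₗ[R] (V →ₗ[R] L)} {φ : V →ₗ[R] V}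
    (he : IsSkewForm e.toLinearMap) (hφ : e.toLinearMap ∘ₗ φ = φ.lcomp R L ∘ₗ e.toLinearMap) :
    IsGeneralizedAlmostContact φ e.symm.toLinearMap (hitchinForm e.toLinearMap φ) where
  skew_bivector := he.isSkewBivector_symm
  skew_form := he.hitchinForm φ
  comp_bivector := by
    rw [LinearEquiv.comp_toLinearMap_symm_eq, LinearMap.comp_assoc,
      LinearEquiv.eq_toLinearMap_symm_comp, hφ]
  sq_eq := by
    rw [symm_comp_hitchinForm hφ]
    abel
  form_comp := hitchinForm_comp hφ

end

/-- Given a skew bijective `ω_J♭ : V → Hom(V, L)` and `φ` with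
`ω_J♭ ∘ φ = φ† ∘ ω_J♭`, the maps `J♯ := (ω_J♭)⁻¹` and
`ω♭ := −(ω_J♭ + φ† ∘ ω_J♭ ∘ φ)` are skew, and the triple `(φ, J♯, ω♭)` satisfies
the structure equations `φ ∘ J♯ = J♯ ∘ φ†`, `φ² = −id − J♯ ∘ ω♭`,
`ω♭ ∘ φ = φ† ∘ ω♭`; moreover `J♯` is bijective, so the triple defines a
generalized almost contact structure on `(V, L)` with invertible `J♯`. -/
theorem contactHitchin_gives_gacs
    (K V L : Type*) [Field K] [AddCommGroup V] [Module K V] [FiniteDimensional K V]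
    [AddCommGroup L] [Module K L] (hL : Module.finrank K L = 1)
    (ωJb : V →ₗ[K] (V →ₗ[K] L)) (φ : V →ₗ[K] V)
    (hskew : ∀ v w : V, ωJb v w = -ωJb w v)
    (hbij : Function.Bijective ωJb)
    (hcompat : ωJb.comp φ = (adjD L φ).comp ωJb) :
    (∀ ψ χ : V →ₗ[K] L, ψ (JsOf ωJb hbij χ) = -χ (JsOf ωJb hbij ψ)) ∧
    (∀ v w : V,
      (-(ωJb + (adjD L φ).comp (ωJb.comp φ))) v w
        = -((-(ωJb + (adjD L φ).comp (ωJb.comp φ))) w v)) ∧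
    φ.comp (JsOf ωJb hbij) = (JsOf ωJb hbij).comp (adjD L φ) ∧
    φ.comp φ = -LinearMap.id
      - (JsOf ωJb hbij).comp (-(ωJb + (adjD L φ).comp (ωJb.comp φ))) ∧
    (-(ωJb + (adjD L φ).comp (ωJb.comp φ))).comp φ
      = (adjD L φ).comp (-(ωJb + (adjD L φ).comp (ωJb.comp φ))) ∧
    Function.Bijective (JsOf ωJb hbij) := by
  let e := LinearEquiv.ofBijective ωJb hbij
  have h := contactHitchin_gives_gacs_general (e := e) hskew hcompat
  exact ⟨h.skew_bivector, h.skew_form, h.comp_bivector, h.sq_eq, h.form_comp, e.symm.bijective⟩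
end
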